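/- arXiv:1503.07211 — 3 statements merged into one kernel-verified Lean document; each statement's English description precedes it below -/
import Mathlib

section
/- Let n ≥ 2 and N = 2^{n-1} − 1. Given any positive reals r_0, r_1, …, r_N, there exist weights λ_z ∈ [0,1] for z ∈ {0,1}^N satisfying (∑_{z: l(z)=l} λ_z)/(∑_{z: l(z)=l} (1−λ_z)) = r_l for every l ∈ {0,1,…,N}, such that the Markov kernel Q ∈ Δ_{N,n} defined by Q(·|z) = λ_z δ_{bin_n(2l(z))} + (1−λ_z) δ_{bin_n(2l(z)+1)} for all z ∈ {0,1}^N lies in the closure of F_{N,n}. -/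
open Finset

/-- The logistic sigmoid function `σ(a) = 1/(1+exp(-a))`. -/
noncomputable def sigmoid (a : ℝ) : ℝ := 1 / (1 + Real.exp (-a))

/-- Real value of a bit. -/
def bval (b : Bool) : ℝ := if b then 1 else 0

/-- The set `F_{k,m}` of Markov kernels representable by a feedforward layer of `m`
sigmoid stochastic units with `k` binary inputs. -/
noncomputable def Fset (k m : ℕ) : Set ((Fin k → Bool) → (Fin m → Bool) → ℝ) :=
  {P | ∃ (V : Fin m → Fin k → ℝ) (c : Fin m → ℝ), ∀ y z,
    P y z = ∏ j, (if z j then sigmoid ((∑ i, V j i * bval (y i)) + c j)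
                  else 1 - sigmoid ((∑ i, V j i * bval (y i)) + c j))}

/-- `Δ_{k,n}`: all Markov kernels from `{0,1}^k` to distributions on `{0,1}^n`. -/
def markovKernels (k n : ℕ) : Set ((Fin k → Bool) → (Fin n → Bool) → ℝ) :=
  {P | (∀ y x, 0 ≤ P y x) ∧ ∀ y, ∑ x, P y x = 1}

/-- Composition of Markov kernels: `(R ∘ Q)(x|y) = ∑_z Q(z|y) R(x|z)`. -/
noncomputable def kcomp {k m n : ℕ} (R : (Fin m → Bool) → (Fin n → Bool) → ℝ)
    (Q : (Fin k → Bool) → (Fin m → Bool) → ℝ) : (Fin k → Bool) → (Fin n → Bool) → ℝ :=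
  fun y x => ∑ z, Q y z * R z x

/-- `Δ_n`: probability distributions on `{0,1}^n`. -/
def simplex (n : ℕ) : Set ((Fin n → Bool) → ℝ) :=
  {p | (∀ x, 0 ≤ p x) ∧ ∑ x, p x = 1}

/-- `Δ_n^+`: strictly positive probability distributions on `{0,1}^n`. -/
def simplexPos (n : ℕ) : Set ((Fin n → Bool) → ℝ) :=
  {p | (∀ x, 0 < p x) ∧ ∑ x, p x = 1}

/-- Mixture `p^⊤ R` of the rows of a kernel `R` with weights `p`. -/
noncomputable def mix {m n : ℕ} (p : (Fin m → Bool) → ℝ)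
    (R : (Fin m → Bool) → (Fin n → Bool) → ℝ) : (Fin n → Bool) → ℝ :=
  fun x => ∑ z, p z * R z x

/-- `E_m`: strictly positive product distributions on `{0,1}^m`, where the `j`-th bit
is `0` with probability `q j ∈ (0,1)`. -/
def Eset (m : ℕ) : Set ((Fin m → Bool) → ℝ) :=
  {p | ∃ q : Fin m → ℝ, (∀ j, q j ∈ Set.Ioo (0:ℝ) 1) ∧
    ∀ z, p z = ∏ j, (if z j then 1 - q j else q j)}

/-- Integer value of a binary vector (bit `i` has weight `2^i`). -/
def intval {k : ℕ} (y : Fin k → Bool) : ℕ := ∑ i, if y i then 2 ^ (i : ℕ) else 0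

/-- `l(z)`: position (1-based) of the largest nonzero entry of `z`, and `0` if `z = 0`. -/
def lidx {N : ℕ} (z : Fin N → Bool) : ℕ :=
  (Finset.univ.filter (fun j => z j = true)).sup (fun j => (j : ℕ) + 1)

/-- `bin_n(l)`: the `n`-bit binary representation of `l`. -/
def binVec (n l : ℕ) : Fin n → Bool := fun i => Nat.testBit l (i : ℕ)

/-- Point measure at `x ∈ {0,1}^n`. -/
noncomputable def deltaAt {n : ℕ} (x : Fin n → Bool) : (Fin n → Bool) → ℝ :=
  fun x' => if x' = x then 1 else 0

/-!
Changing the weight of input bit `i` (counted from `0`) does not affect the inputs `z` with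
`l(z) ≤ i`, and it shifts the preactivation of every `z` with `l(z) = i + 1` by one common constant.
So the preactivations of a single unit can be adjusted one level set of `l` at a time. On each
level the low-order output unit is shifted until its activation probabilities sum to the value
that encodes the ratio `r_l` (intermediate value theorem), and each high-order unit until its
preactivation has the sign prescribed by its bit of `l` on the whole level; scaling up the weights
of the high-order units then makes them deterministic in the limit.
-/

section

open Filter Topology

theorem sigmoid_eq_real_sigmoid : sigmoid = Real.sigmoid := by
  ext a
  rw [sigmoid, Real.sigmoid_def, one_div]

theorem exists_sum_sigmoid_add_eq {ι : Type*} {S : Finset ι} {y : ℝ} (hy : y ∈ Set.Ioo 0 (#S : ℝ))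
    (A : ι → ℝ) : ∃ t, ∑ z ∈ S, sigmoid (A z + t) = y := by
  rw [sigmoid_eq_real_sigmoid]
  have hcont : Continuous fun t => ∑ z ∈ S, Real.sigmoid (A z + t) :=
    continuous_finsetSum _ fun z _ => continuous_sigmoid.comp (continuous_const_add (A z))
  have hbot : Tendsto (fun t => ∑ z ∈ S, Real.sigmoid (A z + t)) atBot (𝓝 0) := by
    simpa using tendsto_finsetSum S fun z _ =>
      Real.tendsto_sigmoid_atBot.comp (tendsto_atBot_add_const_left _ (A z) tendsto_id)
  have htop : Tendsto (fun t => ∑ z ∈ S, Real.sigmoid (A z + t)) atTop (𝓝 #S) := by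
    simpa using tendsto_finsetSum S fun z _ =>
      Real.tendsto_sigmoid_atTop.comp (tendsto_atTop_add_const_left _ (A z) tendsto_id)
  simpa using isPreconnected_univ.intermediate_value_Ioo (by simp) (by simp) hcont.continuousOn
    hbot htop hy

theorem sum_one_sub_div_sum_eq {ι : Type*} {S : Finset ι} (hS : S.Nonempty) {r : ℝ} (hr : 0 < r)
    {s : ι → ℝ} (hs : ∑ z ∈ S, s z = #S / (1 + r)) :
    (∑ z ∈ S, (1 - s z)) / ∑ z ∈ S, s z = r := by
  have hcard : (#S : ℝ) ≠ 0 := by exact_mod_cast hS.card_ne_zero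
  rw [sum_sub_distrib, hs, sum_const, nsmul_one]
  field_simp
  ring

theorem exists_forall_sign_add_eq {ι : Type*} [Finite ι] (b : Bool) (A : ι → ℝ) :
    ∃ t, ∀ z, if b then 0 < A z + t else A z + t < 0 := by
  cases b
  · have h : ∀ᶠ t in atBot, ∀ z, A z + t < 0 := eventually_all.2 fun z =>
      (tendsto_atBot_add_const_left _ (A z) tendsto_id).eventually_lt_atBot 0
    simpa using h.exists
  · have h : ∀ᶠ t in atTop, ∀ z, 0 < A z + t := eventually_all.2 fun z =>
      (tendsto_atTop_add_const_left _ (A z) tendsto_id).eventually_gt_atTop 0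
    simpa using h.exists

theorem tendsto_sigmoid_mul_bval {b : Bool} {a : ℝ} (h : if b then 0 < a else a < 0) :
    Tendsto (fun k : ℝ => sigmoid (k * a)) atTop (𝓝 (bval b)) := by
  rw [sigmoid_eq_real_sigmoid]
  cases b
  · have ha : a < 0 := by simpa using h
    simpa [bval, Function.comp_def] using
      Real.tendsto_sigmoid_atBot.comp (tendsto_id.atTop_mul_const_of_neg ha)
  · have ha : 0 < a := by simpa using h
    simpa [bval, Function.comp_def] using
      Real.tendsto_sigmoid_atTop.comp (tendsto_id.atTop_mul_const ha)

section lidx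

variable {N : ℕ}

theorem lt_lidx_iff {z : Fin N → Bool} {m : ℕ} :
    m < lidx z ↔ ∃ i : Fin N, z i = true ∧ m ≤ i := by
  simp [lidx, Finset.lt_sup_iff]

theorem lidx_le (z : Fin N → Bool) : lidx z ≤ N :=
  Finset.sup_le fun i _ => i.isLt

theorem apply_eq_true_of_lidx_eq {z : Fin N → Bool} {i : Fin N} (h : lidx z = i + 1) :
    z i = true := by
  obtain ⟨j, hj, hij⟩ := lt_lidx_iff.1 (h.symm ▸ Nat.lt_succ_self (i : ℕ) : i < lidx z)
  have hji : (j : ℕ) < i + 1 := h ▸ lt_lidx_iff.2 ⟨j, hj, le_rfl⟩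
  rwa [show i = j from Fin.ext (by omega)]

theorem apply_eq_false_of_lidx_le {z : Fin N → Bool} {i : Fin N} (h : lidx z ≤ i) :
    z i = false := by
  by_contra hi
  exact h.not_gt (lt_lidx_iff.2 ⟨i, by simpa using hi, le_rfl⟩)

theorem exists_lidx_eq {l : ℕ} (hl : l ≤ N) : ∃ z : Fin N → Bool, lidx z = l := by
  refine ⟨fun i => decide ((i : ℕ) < l), eq_of_forall_lt_iff fun m => ?_⟩
  simp only [lt_lidx_iff, decide_eq_true_eq]
  exact ⟨fun ⟨_, hil, hmi⟩ => hmi.trans_lt hil, fun hml => ⟨⟨m, hml.trans_le hl⟩, hml, le_rfl⟩⟩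

end lidx

/-- The preactivation `v^⊤ z + c` of a unit with weight vector `v` and bias `c` on input `z`. -/
noncomputable def preactivation {N : ℕ} (v : Fin N → ℝ) (c : ℝ) (z : Fin N → Bool) : ℝ :=
  (∑ i, v i * bval (z i)) + c

section preactivation

variable {N : ℕ}

theorem preactivation_smul (k : ℝ) (v : Fin N → ℝ) (c : ℝ) (z : Fin N → Bool) :
    preactivation (k • v) (k * c) z = k * preactivation v c z := by
  simp only [preactivation, Pi.smul_apply, smul_eq_mul, mul_assoc, mul_add, mul_sum]

theorem preactivation_add_single (v : Fin N → ℝ) (c : ℝ) (i : Fin N) (t : ℝ) (z : Fin N → Bool) :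
    preactivation (v + Pi.single i t) c z = preactivation v c z + t * bval (z i) := by
  simp only [preactivation, Pi.add_apply, add_mul, sum_add_distrib, Pi.single_apply, ite_mul,
    zero_mul, sum_ite_eq', mem_univ, if_true]
  ring

/-- Here `R l A t` says that `t` is an admissible shift on level `l` of the preactivation `A`
obtained from the lower levels. -/
theorem exists_preactivation_eq_add {R : ℕ → ((Fin N → Bool) → ℝ) → ℝ → Prop}
    (hR : ∀ l ≤ N, ∀ A, ∃ t, R l A t) {m : ℕ} (hm : m ≤ N) :
    ∃ v c, ∀ l ≤ m, ∃ A t, R l A t ∧ ∀ z, lidx z = l → preactivation v c z = A z + t := by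
  induction m with
  | zero =>
    obtain ⟨t, ht⟩ := hR 0 hm 0
    refine ⟨0, t, fun l hl => ⟨0, t, Nat.le_zero.1 hl ▸ ht, fun z _ => ?_⟩⟩
    simp [preactivation]
  | succ m ih =>
    obtain ⟨v, c, hvc⟩ := ih (Nat.le_of_succ_le hm)
    obtain ⟨t, ht⟩ := hR (m + 1) hm (preactivation v c)
    refine ⟨v + Pi.single ⟨m, hm⟩ t, c, fun l hl => ?_⟩
    rcases hl.lt_or_eq with hlt | rfl
    · obtain ⟨A, s, hAs, heq⟩ := hvc l (Nat.le_of_lt_succ hlt)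
      refine ⟨A, s, hAs, fun z hz => ?_⟩
      have hzm : z ⟨m, hm⟩ = false :=
        apply_eq_false_of_lidx_le (hz.trans_le (Nat.le_of_lt_succ hlt))
      simp [preactivation_add_single, hzm, bval, heq z hz]
    · refine ⟨preactivation v c, t, ht, fun z hz => ?_⟩
      have hzm : z ⟨m, hm⟩ = true := apply_eq_true_of_lidx_eq hz
      simp [preactivation_add_single, hzm, bval]

theorem exists_preactivation_sign_eq (b : ℕ → Bool) :
    ∃ v c, ∀ z : Fin N → Bool,
      if b (lidx z) then 0 < preactivation v c z else preactivation v c z < 0 := by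
  obtain ⟨v, c, hvc⟩ := exists_preactivation_eq_add (N := N)
    (fun l _ A => exists_forall_sign_add_eq (b l) A) le_rfl
  refine ⟨v, c, fun z => ?_⟩
  obtain ⟨A, t, hsign, heq⟩ := hvc (lidx z) (lidx_le z)
  rw [heq z rfl]
  exact hsign z

theorem exists_preactivation_ratio_eq {r : ℕ → ℝ} (hr : ∀ l ≤ N, 0 < r l) :
    ∃ v c, ∀ l ≤ N,
      (∑ z : Fin N → Bool with lidx z = l, (1 - sigmoid (preactivation v c z))) /
        (∑ z : Fin N → Bool with lidx z = l, sigmoid (preactivation v c z)) = r l := by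
  have level_nonempty (l) (hl : l ≤ N) : ({z | lidx z = l} : Finset (Fin N → Bool)).Nonempty := by
    simpa [Finset.Nonempty] using exists_lidx_eq hl
  have target_mem (l) (hl : l ≤ N) : (#{z : Fin N → Bool | lidx z = l} : ℝ) / (1 + r l) ∈
      Set.Ioo 0 (#{z : Fin N → Bool | lidx z = l} : ℝ) := by
    have hcard : (0 : ℝ) < #{z : Fin N → Bool | lidx z = l} :=
      Nat.cast_pos.2 (level_nonempty l hl).card_pos
    have hrl := hr l hl
    exact ⟨by positivity, div_lt_self hcard (lt_add_of_pos_right 1 hrl)⟩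
  obtain ⟨v, c, hvc⟩ := exists_preactivation_eq_add
    (fun l hl A => exists_sum_sigmoid_add_eq (target_mem l hl) A) le_rfl
  refine ⟨v, c, fun l hl => sum_one_sub_div_sum_eq (level_nonempty l hl) (hr l hl) ?_⟩
  obtain ⟨A, t, hsum, heq⟩ := hvc l hl
  rw [← hsum]
  exact sum_congr rfl fun z hz => by rw [heq z (mem_filter.1 hz).2]

end preactivation

/-- The functions mapping an input to the activation probability of a single sigmoid unit. -/
def sigmoidUnits (N : ℕ) : Set ((Fin N → Bool) → ℝ) :=
  {p | ∃ v c, p = fun z => sigmoid (preactivation v c z)}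

/-- The product distribution on `{0,1}^m` whose `j`-th bit is `1` with probability `p j`. -/
def bernoulliProduct {m : ℕ} (p : Fin m → ℝ) (x : Fin m → Bool) : ℝ :=
  ∏ j, if x j then p j else 1 - p j

theorem bval_lidx_mem_closure_sigmoidUnits {N : ℕ} (b : ℕ → Bool) :
    (fun z => bval (b (lidx z))) ∈ closure (sigmoidUnits N) := by
  obtain ⟨v, c, hsign⟩ := exists_preactivation_sign_eq (N := N) b
  refine mem_closure_of_tendsto (b := atTop) (f := fun k z => sigmoid (k * preactivation v c z))
    (tendsto_pi_nhds.2 fun z => tendsto_sigmoid_mul_bval (hsign z)) (.of_forall fun k => ?_)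
  exact ⟨k • v, k * c, by simp only [preactivation_smul]⟩

theorem bernoulliProduct_mem_closure_Fset {N m : ℕ} {p : Fin m → (Fin N → Bool) → ℝ}
    (hp : ∀ j, p j ∈ closure (sigmoidUnits N)) :
    (fun z => bernoulliProduct fun j => p j z) ∈ closure (Fset N m) := by
  have hcont : Continuous fun (q : Fin m → (Fin N → Bool) → ℝ) z =>
      bernoulliProduct fun j => q j z := by
    refine continuous_pi fun z => continuous_pi fun x => continuous_finsetProd _ fun j _ => ?_
    split_ifs <;> fun_prop
  have hmaps : Set.MapsTo (fun (q : Fin m → (Fin N → Bool) → ℝ) z =>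
      bernoulliProduct fun j => q j z) (Set.univ.pi fun _ => sigmoidUnits N) (Fset N m) := by
    intro q hq
    choose V c hVc using fun j => hq j trivial
    exact ⟨V, c, fun z x => by simp only [bernoulliProduct, hVc, preactivation]⟩
  refine map_mem_closure hcont ?_ hmaps
  rw [closure_pi_set]
  exact fun j _ => hp j

theorem bernoulliProduct_bval {m : ℕ} (y : Fin m → Bool) :
    bernoulliProduct (fun j => bval (y j)) = deltaAt y := by
  ext x
  have hfactor (j) : (if x j then bval (y j) else 1 - bval (y j)) = if x j = y j then 1 else 0 := by
    cases x j <;> cases y j <;> simp [bval]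
  simp only [bernoulliProduct, hfactor, Fintype.prod_ite_zero, prod_const_one, deltaAt, funext_iff]

theorem bernoulliProduct_cons {m : ℕ} (p : ℝ) (q : Fin m → ℝ) (x : Fin (m + 1) → Bool) :
    bernoulliProduct (Fin.cons p q : Fin (m + 1) → ℝ) x =
      (if x 0 then p else 1 - p) * bernoulliProduct q (Fin.tail x) :=
  Fin.prod_univ_succ _

theorem deltaAt_cons {m : ℕ} (b : Bool) (y : Fin m → Bool) (x : Fin (m + 1) → Bool) :
    deltaAt (Fin.cons b y) x = if x 0 = b then deltaAt y (Fin.tail x) else 0 := by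
  nth_rewrite 1 [← Fin.cons_self_tail x]
  simp only [deltaAt, Fin.cons_inj, ite_and]

theorem bernoulliProduct_cons_bval {m : ℕ} (p : ℝ) (y : Fin m → Bool) :
    bernoulliProduct (Fin.cons p fun j => bval (y j) : Fin (m + 1) → ℝ) =
      fun x => (1 - p) * deltaAt (Fin.cons false y) x + p * deltaAt (Fin.cons true y) x := by
  ext x
  rw [bernoulliProduct_cons, bernoulliProduct_bval, deltaAt_cons, deltaAt_cons]
  cases x 0 <;> simp

theorem mixture_deltaAt_cons_mem_closure_Fset {N m : ℕ} {p : (Fin N → Bool) → ℝ}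
    (hp : p ∈ closure (sigmoidUnits N)) (code : ℕ → Fin m → Bool) :
    (fun z x => (1 - p z) * deltaAt (Fin.cons false (code (lidx z))) x
        + p z * deltaAt (Fin.cons true (code (lidx z))) x) ∈ closure (Fset N (m + 1)) := by
  let q : Fin (m + 1) → (Fin N → Bool) → ℝ := Fin.cons p fun j z => bval (code (lidx z) j)
  have hq (j) : q j ∈ closure (sigmoidUnits N) :=
    Fin.cases hp (fun j => bval_lidx_mem_closure_sigmoidUnits fun l => code l j) j
  have hq_apply (z) : (fun j => q j z) = Fin.cons (p z) fun j => bval (code (lidx z) j) :=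
    funext (Fin.cases rfl fun _ => rfl)
  simpa only [hq_apply, bernoulliProduct_cons_bval] using bernoulliProduct_mem_closure_Fset hq

theorem binVec_bit (m l : ℕ) (b : Bool) :
    binVec (m + 1) (Nat.bit b l) = Fin.cons b (binVec m l) := by
  ext j
  refine Fin.cases ?_ (fun j => ?_) j <;> simp [binVec, Nat.testBit_bit_succ]

theorem pairwise_mixture_kernel_mem_closure_general (N m : ℕ) (code : ℕ → Fin m → Bool) (r : ℕ → ℝ)
    (hr : ∀ l ≤ N, 0 < r l) :
    ∃ lam : (Fin N → Bool) → ℝ,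
      (∀ z, lam z ∈ Set.Icc (0 : ℝ) 1) ∧
      (∀ l ≤ N, (∑ z with lidx z = l, lam z) / (∑ z with lidx z = l, (1 - lam z)) = r l) ∧
      (fun z x => lam z * deltaAt (Fin.cons false (code (lidx z))) x
          + (1 - lam z) * deltaAt (Fin.cons true (code (lidx z))) x)
        ∈ closure (Fset N (m + 1)) := by
  obtain ⟨v, c, hratio⟩ := exists_preactivation_ratio_eq hr
  set p : (Fin N → Bool) → ℝ := fun z => sigmoid (preactivation v c z) with hp
  have hp_mem (z) : p z ∈ Set.Icc (0 : ℝ) 1 := by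
    rw [hp, sigmoid_eq_real_sigmoid]
    exact ⟨Real.sigmoid_nonneg _, Real.sigmoid_le_one _⟩
  refine ⟨fun z => 1 - p z, fun z => ⟨sub_nonneg.2 (hp_mem z).2, sub_le_self _ (hp_mem z).1⟩,
    by simpa only [sub_sub_cancel] using hratio, ?_⟩
  simpa only [sub_sub_cancel] using
    mixture_deltaAt_cons_mem_closure_Fset (subset_closure ⟨v, c, rfl⟩) code

end

/-- Lemma 4: for `n ≥ 2`, `N = 2^(n-1) - 1` and any prescribed positive ratios `r_l`,
there are weights `λ_z ∈ [0,1]` realizing the ratios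
`(∑_{z : l(z)=l} λ_z)/(∑_{z : l(z)=l} (1-λ_z)) = r_l` such that the kernel
`Q(·|z) = λ_z δ_{bin_n(2l(z))} + (1-λ_z) δ_{bin_n(2l(z)+1)}` lies in the closure of
`F_{N,n}`. -/
theorem pairwise_mixture_kernel_mem_closure
    (n : ℕ) (hn : 2 ≤ n) (r : ℕ → ℝ) (hr : ∀ l ≤ 2 ^ (n - 1) - 1, 0 < r l) :
    ∃ lam : (Fin (2 ^ (n - 1) - 1) → Bool) → ℝ,
      (∀ z, lam z ∈ Set.Icc (0:ℝ) 1) ∧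
      (∀ l ≤ 2 ^ (n - 1) - 1,
        (∑ z ∈ Finset.univ.filter (fun z => lidx z = l), lam z) /
          (∑ z ∈ Finset.univ.filter (fun z => lidx z = l), (1 - lam z)) = r l) ∧
      (fun z x => lam z * deltaAt (binVec n (2 * lidx z)) x
          + (1 - lam z) * deltaAt (binVec n (2 * lidx z + 1)) x)
        ∈ closure (Fset (2 ^ (n - 1) - 1) n) := by
  obtain ⟨m, rfl⟩ := Nat.exists_eq_add_of_le' (Nat.one_le_of_lt hn)
  simpa only [← binVec_bit, Nat.bit_false_apply, Nat.bit_true_apply] using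
    pairwise_mixture_kernel_mem_closure_general _ m (binVec m) r hr
end

section
/- Let N ≥ 1 and let p be the product distribution on {0,1}^N with parameters p_j ∈ (0,1), and define q_i = ∑_{z: l(z)=i} p(z) for i ∈ {0,1,…,N}. Then q_0 > 0 and for every i ∈ {1,…,N}, q_i/q_0 = ((1−p_i)/p_i) · (1/∏_{j=1}^{i−1} p_j). In particular, for any prescribed positive reals t_1,…,t_N there is a choice of p_1,…,p_N ∈ (0,1) with q_i/q_0 = t_i for all i, so the map p ↦ (q_0,…,q_N) sends the set of such product distributions onto the relative interior of the N-dimensional probability simplex. -/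
open Finset

/-- The vector `q = (q_0, …, q_N)` where `q_i` is the probability, under the product
distribution with parameters `pp`, that the largest nonzero index of a sample equals `i`. -/
noncomputable def qvec (N : ℕ) (pp : Fin N → ℝ) : Fin (N + 1) → ℝ :=
  fun i => ∑ z ∈ Finset.univ.filter (fun z : Fin N → Bool => lidx z = (i : ℕ)),
    ∏ j, if z j then 1 - pp j else pp j

/-!
The event `l(z) ≤ k` says that every bit from position `k + 1` on vanishes, so its probability is
the tail product `T_k = ∏_{j > k} p_j`. Hence `q_0 = T_0` and
`q_i = T_i - T_{i-1} = (1 - p_i) T_i`, which gives the ratios, while `∑ i, q_i` telescopes to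
`T_N = 1`.

For surjectivity, let `w_0, …, w_N` be positive with partial sums `S_k = w_0 + ⋯ + w_k`. For
`p_i = S_{i-1} / S_i` the tail products telescope to `T_k = S_k / S_N`, so that `q_i = w_i / S_N`.
The weights `(1, t_1, …, t_N)` realise prescribed ratios `t`, and the weights `v` realise a point
`v` of the open simplex.
-/

section TailProd

variable {n : ℕ}

/-- The product of the factors `f j` with `k ≤ j`. For the parameters of a product distribution on
`{0,1}^n` it is the cumulative distribution function of `lidx` at `k`. As `Fin n` is indexed from
`0`, `k` ranges over `Fin (n + 1)` and `k = Fin.last n` gives the empty product. -/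
def tailProd {M : Type*} [CommMonoid M] (f : Fin n → M) (k : Fin (n + 1)) : M :=
  ∏ j with k ≤ j.castSucc, f j

section CommMonoid

variable {M : Type*} [CommMonoid M] (f : Fin n → M)

lemma tailProd_zero : tailProd f 0 = ∏ j, f j := by
  simp [tailProd]

lemma tailProd_last : tailProd f (Fin.last n) = 1 := by
  simp [tailProd, Fin.last_le_iff, Fin.castSucc_ne_last]

lemma tailProd_castSucc (i : Fin n) : tailProd f i.castSucc = f i * tailProd f i.succ := by
  have filter_eq : univ.filter (fun j : Fin n => i.castSucc ≤ j.castSucc)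
      = insert i (univ.filter fun j : Fin n => i.succ ≤ j.castSucc) := by
    ext j
    simp only [mem_insert, mem_filter_univ, Fin.castSucc_le_castSucc_iff,
      Fin.succ_le_castSucc_iff, le_iff_eq_or_lt (a := i) (b := j), eq_comm]
  rw [tailProd, filter_eq, prod_insert (by simp [Fin.succ_le_castSucc_iff]), tailProd]

lemma prod_lt_mul_tailProd_castSucc (i : Fin n) :
    (∏ j with j < i, f j) * tailProd f i.castSucc = tailProd f 0 := by
  rw [tailProd_zero, ← prod_filter_mul_prod_filter_not univ (· < i)]
  simp [tailProd]

end CommMonoid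

lemma tailProd_pos {R : Type*} [CommSemiring R] [PartialOrder R] [IsStrictOrderedRing R]
    {f : Fin n → R} (hf : ∀ j, 0 < f j) (k : Fin (n + 1)) : 0 < tailProd f k :=
  prod_pos fun j _ => hf j

lemma tailProd_castSucc_div_succ {G : Type*} [CommGroupWithZero G] {S : Fin (n + 1) → G}
    (hS : ∀ k, S k ≠ 0) (k : Fin (n + 1)) :
    tailProd (fun j => S j.castSucc / S j.succ) k = S k / S (Fin.last n) := by
  induction k using Fin.reverseInduction with
  | last => rw [tailProd_last, div_self (hS _)]
  | cast i ih => rw [tailProd_castSucc, ih, div_mul_div_cancel₀ (hS _)]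

end TailProd

lemma sum_Iic_fin_succ {n : ℕ} {M : Type*} [AddCommMonoid M] (w : Fin (n + 1) → M) (i : Fin n) :
    ∑ j ∈ Iic i.succ, w j = w i.succ + ∑ j ∈ Iic i.castSucc, w j := by
  have Iic_eq : Iic i.succ = insert i.succ (Iic i.castSucc) := by
    ext j
    simp only [mem_insert, mem_Iic, le_iff_eq_or_lt (b := i.succ), Fin.le_castSucc_iff]
  rw [Iic_eq, sum_insert (by simp)]

section Lidx

variable {N : ℕ}

lemma lidx_le_iff (z : Fin N → Bool) (k : ℕ) :
    lidx z ≤ k ↔ ∀ j : Fin N, k ≤ j → z j = false := by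
  simp only [lidx, Finset.sup_le_iff, mem_filter_univ, Nat.succ_le_iff]
  refine forall_congr' fun j => ?_
  rw [← not_imp_not, not_lt, Bool.not_eq_true]

lemma sum_filter_lidx_le {R : Type*} [CommRing R] (p : Fin N → R) (k : Fin (N + 1)) :
    ∑ z : Fin N → Bool with lidx z ≤ k, ∏ j, (if z j then 1 - p j else p j) = tailProd p k := by
  have filter_eq : ({z | lidx z ≤ k} : Finset (Fin N → Bool))
      = Fintype.piFinset fun j => if k ≤ j.castSucc then {false} else univ := by
    ext z
    simp only [mem_filter_univ, lidx_le_iff, Fintype.mem_piFinset]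
    refine forall_congr' fun j => ?_
    by_cases h : (k : ℕ) ≤ j <;> simp [Fin.le_def, h]
  rw [filter_eq, ← prod_univ_sum _ fun j (b : Bool) => if b then 1 - p j else p j, tailProd,
    prod_filter]
  refine prod_congr rfl fun j _ => ?_
  split_ifs <;> simp

end Lidx

section Qvec

variable {N : ℕ} (p : Fin N → ℝ)

lemma qvec_zero : qvec N p 0 = tailProd p 0 := by
  rw [qvec, ← sum_filter_lidx_le]
  exact sum_congr (filter_congr fun z _ => by simp) fun _ _ => rfl

lemma qvec_succ_eq_sub (i : Fin N) :
    qvec N p i.succ = tailProd p i.succ - tailProd p i.castSucc := by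
  rw [eq_sub_iff_add_eq', ← sum_filter_lidx_le, ← sum_filter_lidx_le, qvec, ← sum_union]
  · congr 1
    ext z
    simp [Nat.le_succ_iff]
  · rw [disjoint_filter]
    exact fun z _ hz => (Nat.lt_succ_of_le hz).ne

lemma qvec_succ (i : Fin N) : qvec N p i.succ = (1 - p i) * tailProd p i.succ := by
  rw [qvec_succ_eq_sub, tailProd_castSucc, sub_mul, one_mul]

lemma sum_qvec : ∑ i, qvec N p i = 1 := by
  rw [Fin.sum_univ_succ, qvec_zero]
  simp only [qvec_succ_eq_sub, sum_sub_distrib]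
  rw [← add_sub_assoc, ← Fin.sum_univ_succ, Fin.sum_univ_castSucc, add_sub_cancel_left,
    tailProd_last]

variable {p}

lemma qvec_zero_pos (hp : ∀ j, 0 < p j) : 0 < qvec N p 0 :=
  qvec_zero p ▸ tailProd_pos hp 0

lemma qvec_pos (hp : ∀ j, p j ∈ Set.Ioo (0 : ℝ) 1) (i : Fin (N + 1)) : 0 < qvec N p i := by
  cases i using Fin.cases with
  | zero => exact qvec_zero_pos fun j => (hp j).1
  | succ i =>
    rw [qvec_succ]
    exact mul_pos (sub_pos.2 (hp i).2) (tailProd_pos (fun j => (hp j).1) _)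

lemma qvec_succ_div_qvec_zero (hp : ∀ j, p j ≠ 0) (i : Fin N) :
    qvec N p i.succ / qvec N p 0 = (1 - p i) / p i * (1 / ∏ j with j < i, p j) := by
  have tail_ne_zero : tailProd p i.succ ≠ 0 := prod_ne_zero_iff.2 fun j _ => hp j
  rw [qvec_succ, qvec_zero, ← prod_lt_mul_tailProd_castSucc p i, tailProd_castSucc, ← mul_assoc,
    mul_div_mul_right _ _ tail_ne_zero, div_mul_div_comm, mul_one, mul_comm (p i)]

lemma exists_qvec_eq_div_sum {w : Fin (N + 1) → ℝ} (hw : ∀ i, 0 < w i) :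
    ∃ p : Fin N → ℝ, (∀ j, p j ∈ Set.Ioo (0 : ℝ) 1) ∧ ∀ i, qvec N p i = w i / ∑ k, w k := by
  let S : Fin (N + 1) → ℝ := fun k => ∑ j ∈ Iic k, w j
  have S_pos (k) : 0 < S k := sum_pos (fun j _ => hw j) nonempty_Iic
  have S_succ (i : Fin N) : S i.succ = w i.succ + S i.castSucc := sum_Iic_fin_succ w i
  have S_zero : S 0 = w 0 := by simp [S, ← bot_eq_zero]
  have S_last : S (Fin.last N) = ∑ k, w k := by simp [S, ← Fin.top_eq_last]
  have tail_eq := tailProd_castSucc_div_succ fun k => (S_pos k).ne'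
  refine ⟨fun j => S j.castSucc / S j.succ, fun j => ⟨div_pos (S_pos _) (S_pos _), ?_⟩, fun i => ?_⟩
  · rw [div_lt_one (S_pos _), S_succ]
    exact lt_add_of_pos_left _ (hw _)
  · cases i using Fin.cases with
    | zero => rw [qvec_zero, tail_eq, S_zero, S_last]
    | succ i =>
      rw [qvec_succ_eq_sub, tail_eq, tail_eq, ← sub_div, S_succ, add_sub_cancel_right, S_last]

lemma exists_qvec_succ_div_qvec_zero_eq {t : Fin N → ℝ} (ht : ∀ i, 0 < t i) :
    ∃ p : Fin N → ℝ, (∀ j, p j ∈ Set.Ioo (0 : ℝ) 1) ∧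
      ∀ i : Fin N, qvec N p i.succ / qvec N p 0 = t i := by
  let w : Fin (N + 1) → ℝ := Fin.cons 1 t
  have hw : ∀ i, 0 < w i := Fin.cases one_pos ht
  obtain ⟨p, hp, hq⟩ := exists_qvec_eq_div_sum hw
  have sum_ne_zero : ∑ k, w k ≠ 0 := (sum_pos (fun k _ => hw k) univ_nonempty).ne'
  refine ⟨p, hp, fun i => ?_⟩
  rw [hq, hq, div_div_div_cancel_right₀ sum_ne_zero]
  exact div_one (t i)

lemma image_qvec_eq_setOf_pos_and_sum_eq_one :
    qvec N '' {p | ∀ j, p j ∈ Set.Ioo (0 : ℝ) 1}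
      = {v : Fin (N + 1) → ℝ | (∀ i, 0 < v i) ∧ ∑ i, v i = 1} := by
  refine Set.Subset.antisymm ?_ ?_
  · rintro _ ⟨p, hp, rfl⟩
    exact ⟨qvec_pos hp, sum_qvec p⟩
  · rintro v ⟨v_pos, v_sum⟩
    obtain ⟨p, hp, hq⟩ := exists_qvec_eq_div_sum v_pos
    exact ⟨p, hp, funext fun i => by rw [hq, v_sum, div_one]⟩

end Qvec

/-- `q_0 > 0`, `q_i/q_0 = ((1-p_i)/p_i)·(1/∏_{j<i} p_j)`, the ratios `q_i/q_0` can be made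
arbitrary positive reals, and `pp ↦ (q_0,…,q_N)` maps the product distributions onto the
relative interior of the `N`-dimensional probability simplex. -/
theorem qvec_ratios_and_surjectivity (N : ℕ) (hN : 1 ≤ N) :
    (∀ pp : Fin N → ℝ, (∀ j, pp j ∈ Set.Ioo (0:ℝ) 1) →
      0 < qvec N pp 0 ∧
      ∀ i : Fin N, qvec N pp i.succ / qvec N pp 0
        = ((1 - pp i) / pp i) * (1 / ∏ j ∈ Finset.univ.filter (fun j => j < i), pp j)) ∧
    (∀ t : Fin N → ℝ, (∀ i, 0 < t i) →
      ∃ pp : Fin N → ℝ, (∀ j, pp j ∈ Set.Ioo (0:ℝ) 1) ∧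
        ∀ i : Fin N, qvec N pp i.succ / qvec N pp 0 = t i) ∧
    qvec N '' {pp | ∀ j, pp j ∈ Set.Ioo (0:ℝ) 1}
      = {v : Fin (N + 1) → ℝ | (∀ i, 0 < v i) ∧ ∑ i, v i = 1} := by
  exact ⟨fun pp hpp => ⟨qvec_zero_pos fun j => (hpp j).1,
      qvec_succ_div_qvec_zero fun j => (hpp j).1.ne'⟩,
    fun t ht => exists_qvec_succ_div_qvec_zero_eq ht,
    image_qvec_eq_setOf_pos_and_sum_eq_one⟩
end

section
/- For n = 2 and N = 2^{n-1} − 1 = 1, set b = −(1,1)^⊤... [replaced by the general claim:] For any n ≥ 1 and N = 2^n − 1, define b = −(1,…,1)^⊤ ∈ ℝ^n and let the l-th column of W ∈ ℝ^{n×N} be 2^{l+1}(bin_n(l) − (1/2,…,1/2)) for l = 1,…,N. Then for every z ∈ {0,1}^N, sgn(Wz + b) = sgn(bin_n(l(z)) − (1/2,…,1/2)) entrywise, and in particular every entry of Wz + b is nonzero. -/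
open Finset

/-!
Put `ε l = ±1` according to whether the `j`-th bit of `l` is `1` or `0`. Column `l` of `W` has
`j`-th entry `2 ^ l * ε l`, and the bias `-1` is the same expression at `l = 0`. Hence the `j`-th
entry of `Wz + b` is `∑ 2 ^ l * ε l`, summed over `l = 0` and the positions `l` of the ones of `z`.
The largest of these is `l(z)`, and its term outweighs all the others together.
-/

lemma sign_add_eq_sign_left_of_abs_lt {G : Type*} [AddCommGroup G] [LinearOrder G]
    [IsOrderedAddMonoid G] {x y : G} (h : |y| < |x|) :
    SignType.sign (x + y) = SignType.sign x := by
  obtain ⟨hlower, hupper⟩ := abs_lt.1 h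
  rcases lt_trichotomy x 0 with hx | rfl | hx
  · rw [abs_of_neg hx, lt_neg_iff_add_neg'] at hupper
    rw [sign_neg hx, sign_neg hupper]
  · exact absurd h (by simp)
  · rw [abs_of_pos hx, neg_lt_iff_pos_add'] at hlower
    rw [sign_pos hx, sign_pos hlower]

section DominantPower

variable {R : Type*} [CommRing R] [LinearOrder R] [IsStrictOrderedRing R]
  {b : R} {S : Finset ℕ} {m : ℕ} {ε : ℕ → R}

lemma sum_pow_lt_pow (hb : 2 ≤ b) (hS : ∀ l ∈ S, l < m) : ∑ l ∈ S, b ^ l < b ^ m := by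
  have hpow (l : ℕ) : 0 ≤ b ^ l := pow_nonneg (zero_le_two.trans hb) l
  calc ∑ l ∈ S, b ^ l
    _ ≤ ∑ l ∈ range m, b ^ l :=
        sum_le_sum_of_subset_of_nonneg (fun l hl => mem_range.2 (hS l hl)) fun l _ _ => hpow l
    _ ≤ (∑ l ∈ range m, b ^ l) * (b - 1) :=
        le_mul_of_one_le_right (sum_nonneg fun l _ => hpow l) (by linarith)
    _ = b ^ m - 1 := geom_sum_mul b m
    _ < b ^ m := sub_one_lt _

lemma abs_sum_pow_mul_lt_pow (hb : 2 ≤ b) (hS : ∀ l ∈ S, l < m) (hε : ∀ l ∈ S, |ε l| ≤ 1) :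
    |∑ l ∈ S, b ^ l * ε l| < b ^ m := by
  have hpow (l : ℕ) : 0 ≤ b ^ l := pow_nonneg (zero_le_two.trans hb) l
  calc |∑ l ∈ S, b ^ l * ε l|
    _ ≤ ∑ l ∈ S, |b ^ l * ε l| := abs_sum_le_sum_abs _ _
    _ ≤ ∑ l ∈ S, b ^ l := sum_le_sum fun l hl => by
        rw [abs_mul, abs_of_nonneg (hpow l)]
        exact mul_le_of_le_one_right (hpow l) (hε l hl)
    _ < b ^ m := sum_pow_lt_pow hb hS

lemma sign_sum_pow_mul_eq_sign (hb : 2 ≤ b) (hm : IsGreatest (S : Set ℕ) m)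
    (hε : ∀ l ∈ S, |ε l| = 1) :
    SignType.sign (∑ l ∈ S, b ^ l * ε l) = SignType.sign (ε m) := by
  have hpos : 0 < b ^ m := pow_pos (zero_lt_two.trans_le hb) m
  have htail : |∑ l ∈ S.erase m, b ^ l * ε l| < |b ^ m * ε m| := by
    rw [abs_mul, abs_of_pos hpos, hε m hm.1, mul_one]
    refine abs_sum_pow_mul_lt_pow hb (fun l hl => ?_) fun l hl => (hε l (mem_of_mem_erase hl)).le
    exact lt_of_le_of_ne (hm.2 (mem_of_mem_erase hl)) (ne_of_mem_erase hl)
  rw [← add_sum_erase S _ hm.1, sign_add_eq_sign_left_of_abs_lt htail, sign_mul, sign_pos hpos,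
    one_mul]

end DominantPower

lemma abs_two_mul_bval_sub_half (b : Bool) : |2 * (bval b - 1 / 2)| = 1 := by
  cases b <;> norm_num [bval]

lemma sum_mul_bval {ι : Type*} [Fintype ι] (g : ι → ℝ) (z : ι → Bool) :
    ∑ c, g c * bval (z c) = ∑ c with z c = true, g c := by
  simp only [bval, mul_ite, mul_one, mul_zero, sum_filter]

/-- The 1-based positions of the ones of `z`, together with `0`. The extra index `0` accounts for
the bias and makes `lidx z` the greatest element also when `z = 0`. -/
def activeIndices {N : ℕ} (z : Fin N → Bool) : Finset ℕ :=
  insert 0 ((univ.filter fun c => z c = true).image fun c : Fin N => (c : ℕ) + 1)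

section ActiveIndices

variable {N : ℕ} (z : Fin N → Bool)

lemma isGreatest_lidx : IsGreatest (activeIndices z : Set ℕ) (lidx z) := by
  have hsup : lidx z = (activeIndices z).sup id := by
    simp [lidx, activeIndices, sup_image]
  obtain ⟨l, hl, hmax⟩ := exists_mem_eq_sup (activeIndices z) (insert_nonempty _ _) id
  rw [hsup]
  exact ⟨hmax ▸ hl, fun k hk => le_sup (f := id) hk⟩

lemma sum_activeIndices {M : Type*} [AddCommMonoid M] (g : ℕ → M) :
    ∑ l ∈ activeIndices z, g l = g 0 + ∑ c with z c = true, g ((c : ℕ) + 1) := by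
  rw [activeIndices, sum_insert (by simp), sum_image fun c _ d _ h => Fin.ext (Nat.succ.inj h)]

lemma sum_columns_add_bias_eq_sum_activeIndices (β : ℕ → Bool) :
    (∑ c : Fin N, (2 ^ ((c : ℕ) + 2) * (bval (β ((c : ℕ) + 1)) - 1 / 2)) * bval (z c))
        + 2 * (bval (β 0) - 1 / 2)
      = ∑ l ∈ activeIndices z, 2 ^ l * (2 * (bval (β l) - 1 / 2)) := by
  rw [sum_mul_bval, sum_activeIndices, add_comm, pow_zero, one_mul]
  congr! 2 with c
  ring

end ActiveIndices

theorem explicit_orthant_map_general {N : ℕ} (β : ℕ → Bool) (z : Fin N → Bool) :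
    (β (lidx z) = true →
      0 < (∑ c : Fin N, (2 ^ ((c : ℕ) + 2) * (bval (β ((c : ℕ) + 1)) - 1 / 2)) * bval (z c))
        + 2 * (bval (β 0) - 1 / 2)) ∧
    (β (lidx z) = false →
      (∑ c : Fin N, (2 ^ ((c : ℕ) + 2) * (bval (β ((c : ℕ) + 1)) - 1 / 2)) * bval (z c))
        + 2 * (bval (β 0) - 1 / 2) < 0) := by
  have hsign := sign_sum_pow_mul_eq_sign (b := (2 : ℝ)) le_rfl (isGreatest_lidx z)
    fun l _ => abs_two_mul_bval_sub_half (β l)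
  rw [sum_columns_add_bias_eq_sum_activeIndices, ← sign_eq_one_iff, ← sign_eq_neg_one_iff, hsign]
  constructor <;> intro hbit <;> norm_num [hbit, bval]

/-- For `b = -(1,…,1)` and `W` with `l`-th column `2^(l+1)(bin_n(l) - 1/2)` (`l = 1,…,N`,
here indexed by `c : Fin N` with `l = c + 1`), one has
`sgn(Wz + b) = sgn(bin_n(l(z)) - 1/2)` entrywise for every `z ∈ {0,1}^N`;
in particular every entry of `Wz + b` is nonzero. -/
theorem explicit_orthant_map (n : ℕ) (hn : 1 ≤ n) :
    ∀ z : Fin (2 ^ n - 1) → Bool, ∀ j : Fin n,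
      (binVec n (lidx z) j = true →
        0 < (∑ c : Fin (2 ^ n - 1),
              (2 ^ ((c : ℕ) + 2) * (bval (binVec n ((c : ℕ) + 1) j) - 1 / 2)) * bval (z c))
            + (-1)) ∧
      (binVec n (lidx z) j = false →
        (∑ c : Fin (2 ^ n - 1),
            (2 ^ ((c : ℕ) + 2) * (bval (binVec n ((c : ℕ) + 1) j) - 1 / 2)) * bval (z c))
          + (-1) < 0) := by
  have hbias (j : Fin n) : 2 * (bval (binVec n 0 j) - 1 / 2) = -1 := by norm_num [binVec, bval]
  exact fun z j => hbias j ▸ explicit_orthant_map_general (binVec n · j) z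
end
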